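/- Let α > 0 and x₀ ∈ ℝ. For (x,t) ∈ ℝ² set ξ := x + 2t and η := tanh(2α)·(x + 2t + 4t·sech²(2α) + x₀). Then the denominator D(x,t) := cosh(ξ+2α)e^{−2η} + cosh(ξ−2α)e^{2η} + 2cosh(ξ)cosh(2α) is strictly positive everywhere, and the function û(x,t) := ( sinh(ξ+2α)e^{−2η} + sinh(ξ−2α)e^{2η} + 2sinh(ξ)(1 − sinh²(2α))·sech(2α) ) / D(x,t) is smooth on ℝ × ℝ and satisfies the mKdV equation û_t − 6û²û_x + û_xxx = 0 at every point (x,t). This is the two-soliton solution obtained from the dark breather in the limit k → 1. -/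

import Mathlib

noncomputable section

/-- Partial derivative in the first (spatial) variable. -/
def ux (u : ℝ × ℝ → ℝ) (p : ℝ × ℝ) : ℝ := deriv (fun y => u (y, p.2)) p.1

/-- Partial derivative in the second (temporal) variable. -/
def ut (u : ℝ × ℝ → ℝ) (p : ℝ × ℝ) : ℝ := deriv (fun s => u (p.1, s)) p.2

/-- The traveling variable `ξ = x + 2t`. -/
def xiTS (w : ℝ × ℝ) : ℝ := w.1 + 2 * w.2

/-- The variable `η = tanh(2α)(x + 2t + 4t·sech²(2α) + x₀)`. -/
def etaTS (α x₀ : ℝ) (w : ℝ × ℝ) : ℝ :=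
  Real.tanh (2 * α) * (w.1 + 2 * w.2 + 4 * w.2 * (1 / Real.cosh (2 * α)) ^ 2 + x₀)

/-- The denominator of the two-soliton solution. -/
def DdenTS (α x₀ : ℝ) (w : ℝ × ℝ) : ℝ :=
  Real.cosh (xiTS w + 2 * α) * Real.exp (-(2 * etaTS α x₀ w)) +
  Real.cosh (xiTS w - 2 * α) * Real.exp (2 * etaTS α x₀ w) +
  2 * Real.cosh (xiTS w) * Real.cosh (2 * α)

/-- The two-soliton solution of the defocusing mKdV equation obtained from the dark
breather in the limit `k → 1`. -/
def uhatTS (α x₀ : ℝ) (w : ℝ × ℝ) : ℝ :=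
  (Real.sinh (xiTS w + 2 * α) * Real.exp (-(2 * etaTS α x₀ w)) +
   Real.sinh (xiTS w - 2 * α) * Real.exp (2 * etaTS α x₀ w) +
   2 * Real.sinh (xiTS w) * (1 - Real.sinh (2 * α) ^ 2) * (1 / Real.cosh (2 * α))) /
  DdenTS α x₀ w


def gfTS (p1 q1 p2 q2 p3 q3 a b : ℝ) : ℝ :=
  (p1 * Real.cosh a + q1 * Real.sinh a) * Real.exp (-b) +
  (p2 * Real.cosh a + q2 * Real.sinh a) * Real.exp b +
  (p3 * Real.cosh a + q3 * Real.sinh a)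

theorem gfTS_deriv (p1 q1 p2 q2 p3 q3 : ℝ) (a b : ℝ → ℝ) (k m x : ℝ)
    (ha : HasDerivAt a k x) (hb : HasDerivAt b m x) :
    HasDerivAt (fun y => gfTS p1 q1 p2 q2 p3 q3 (a y) (b y))
      (gfTS (k * q1 - m * p1) (k * p1 - m * q1) (k * q2 + m * p2) (k * p2 + m * q2)
        (k * q3) (k * p3) (a x) (b x)) x := by
  unfold gfTS
  have hc := ha.cosh
  have hs := ha.sinh
  have h := ((((hc.const_mul p1).add (hs.const_mul q1)).mul hb.neg.exp).add
    (((hc.const_mul p2).add (hs.const_mul q2)).mul hb.exp)).add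
    ((hc.const_mul p3).add (hs.const_mul q3))
  refine h.congr_deriv ?_
  simp only [Pi.add_apply, Pi.neg_apply]
  ring

theorem quotTS (n0 n1 n2 n3 d0 d1 d2 d3 : ℝ → ℝ)
    (hd : ∀ y, d0 y ≠ 0)
    (hn0 : ∀ y, HasDerivAt n0 (n1 y) y) (hn1 : ∀ y, HasDerivAt n1 (n2 y) y)
    (hn2 : ∀ y, HasDerivAt n2 (n3 y) y)
    (hd0 : ∀ y, HasDerivAt d0 (d1 y) y) (hd1 : ∀ y, HasDerivAt d1 (d2 y) y)
    (hd2 : ∀ y, HasDerivAt d2 (d3 y) y) (x nt dt : ℝ)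
    (h1 : d0 x * d2 x - d1 x ^ 2 + n0 x ^ 2 - d0 x ^ 2 = 0)
    (h2 : nt * d0 x - n0 x * dt + n3 x * d0 x - 3 * n2 x * d1 x + 3 * n1 x * d2 x
      - n0 x * d3 x - 6 * (n1 x * d0 x - n0 x * d1 x) = 0) :
    (nt * d0 x - n0 x * dt) / d0 x ^ 2
      - 6 * (n0 x / d0 x) ^ 2 * deriv (fun y => n0 y / d0 y) x
      + deriv (fun z => deriv (fun y' => deriv (fun y => n0 y / d0 y) y') z) x = 0 := by
  have e1 : (fun y' => deriv (fun y => n0 y / d0 y) y') =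
      fun y => (n1 y * d0 y - n0 y * d1 y) / d0 y ^ 2 := by
    funext y
    exact ((hn0 y).div (hd0 y) (hd y)).deriv
  have e2 : (fun z => deriv (fun y => (n1 y * d0 y - n0 y * d1 y) / d0 y ^ 2) z) =
      fun y => ((n2 y * d0 y - n0 y * d2 y) * d0 y
        - 2 * (n1 y * d0 y - n0 y * d1 y) * d1 y) / d0 y ^ 3 := by
    funext y
    have h := ((((hn1 y).mul (hd0 y)).sub ((hn0 y).mul (hd1 y))).div ((hd0 y).pow 2)
      (pow_ne_zero 2 (hd y))).deriv
    refine Eq.trans h ?_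
    have := hd y
    simp only [Pi.mul_apply, Pi.sub_apply, Pi.pow_apply]
    field_simp
    push_cast
    ring
  have e3 : deriv (fun y => ((n2 y * d0 y - n0 y * d2 y) * d0 y
        - 2 * (n1 y * d0 y - n0 y * d1 y) * d1 y) / d0 y ^ 3) x =
      (((n3 x * d0 x + n2 x * d1 x - n1 x * d2 x - n0 x * d3 x) * d0 x
        + (n2 x * d0 x - n0 x * d2 x) * d1 x
        - 2 * (n2 x * d0 x - n0 x * d2 x) * d1 x
        - 2 * (n1 x * d0 x - n0 x * d1 x) * d2 x) * d0 x
        - 3 * ((n2 x * d0 x - n0 x * d2 x) * d0 x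
        - 2 * (n1 x * d0 x - n0 x * d1 x) * d1 x) * d1 x) / d0 x ^ 4 := by
    have h := ((((((hn2 x).mul (hd0 x)).sub ((hn0 x).mul (hd2 x))).mul (hd0 x)).sub
      (((((hn1 x).mul (hd0 x)).sub ((hn0 x).mul (hd1 x))).const_mul 2).mul (hd1 x))).div
      ((hd0 x).pow 3) (pow_ne_zero 3 (hd x))).deriv
    refine Eq.trans h ?_
    have := hd x
    simp only [Pi.mul_apply, Pi.sub_apply, Pi.pow_apply]
    field_simp
    push_cast
    ring
  have e1' := congrFun e1 x
  rw [e1', e1, e2, e3]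
  have := hd x
  field_simp
  linear_combination d0 x ^ 2 * h2 - 6 * (n1 x * d0 x - n0 x * d1 x) * h1

theorem denTS_eq (α x₀ : ℝ) (w : ℝ × ℝ) : DdenTS α x₀ w =
    gfTS (Real.cosh (2 * α)) (Real.sinh (2 * α)) (Real.cosh (2 * α)) (-Real.sinh (2 * α))
      (2 * Real.cosh (2 * α)) 0 (xiTS w) (2 * etaTS α x₀ w) := by
  unfold DdenTS gfTS
  rw [Real.cosh_add, Real.cosh_sub]
  ring

theorem uhatTS_eq (α x₀ : ℝ) (w : ℝ × ℝ) : uhatTS α x₀ w =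
    gfTS (Real.sinh (2 * α)) (Real.cosh (2 * α)) (-Real.sinh (2 * α)) (Real.cosh (2 * α))
      0 (2 * (1 - Real.sinh (2 * α) ^ 2) / Real.cosh (2 * α)) (xiTS w) (2 * etaTS α x₀ w) /
    gfTS (Real.cosh (2 * α)) (Real.sinh (2 * α)) (Real.cosh (2 * α)) (-Real.sinh (2 * α))
      (2 * Real.cosh (2 * α)) 0 (xiTS w) (2 * etaTS α x₀ w) := by
  rw [← denTS_eq]
  unfold uhatTS gfTS
  rw [Real.sinh_add, Real.sinh_sub]
  ring

theorem denTS_pos (α x₀ : ℝ) (w : ℝ × ℝ) : 0 < DdenTS α x₀ w := by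
  unfold DdenTS
  have h1 := Real.cosh_pos (xiTS w + 2 * α)
  have h2 := Real.cosh_pos (xiTS w - 2 * α)
  have h3 := Real.cosh_pos (xiTS w)
  have h4 := Real.cosh_pos (2 * α)
  positivity

theorem uhatTS_smooth (α x₀ : ℝ) : ContDiff ℝ (⊤ : ℕ∞) (uhatTS α x₀) := by
  have hxi : ContDiff ℝ (⊤ : ℕ∞) xiTS := by unfold xiTS; fun_prop
  have heta : ContDiff ℝ (⊤ : ℕ∞) (etaTS α x₀) := by unfold etaTS; fun_prop
  have hg : ∀ p1 q1 p2 q2 p3 q3 : ℝ, ContDiff ℝ (⊤ : ℕ∞)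
      (fun w => gfTS p1 q1 p2 q2 p3 q3 (xiTS w) (2 * etaTS α x₀ w)) := by
    intros
    unfold gfTS
    have hc := hxi.cosh
    have hs := hxi.sinh
    have he : ContDiff ℝ (⊤ : ℕ∞) (fun w => 2 * etaTS α x₀ w) := contDiff_const.mul heta
    have he1 := he.exp
    have he2 := he.neg.exp
    fun_prop
  rw [show uhatTS α x₀ = _ from funext (uhatTS_eq α x₀)]
  refine (hg _ _ _ _ _ _).div (hg _ _ _ _ _ _) ?_
  intro w
  rw [← denTS_eq]
  exact (denTS_pos α x₀ w).ne'

theorem bil1TS (α a b : ℝ) :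
    let c := Real.cosh (2 * α)
    let s := Real.sinh (2 * α)
    (gfTS (c) (s) (c) (-s) (2 * c) (0) a b) * (gfTS (1 * (1 * c - (2 * s / c) * s) - (2 * s / c) * (1 * s - (2 * s / c) * c)) (1 * (1 * s - (2 * s / c) * c) - (2 * s / c) * (1 * c - (2 * s / c) * s)) (1 * (1 * c + (2 * s / c) * (-s)) + (2 * s / c) * (1 * (-s) + (2 * s / c) * c)) (1 * (1 * (-s) + (2 * s / c) * c) + (2 * s / c) * (1 * c + (2 * s / c) * (-s))) (1 * (1 * (2 * c))) (1 * (1 * 0)) a b) - (gfTS (1 * s - (2 * s / c) * c) (1 * c - (2 * s / c) * s) (1 * (-s) + (2 * s / c) * c) (1 * c + (2 * s / c) * (-s)) (1 * 0) (1 * (2 * c)) a b) ^ 2 + (gfTS (s) (c) (-s) (c) (0) (2 * (1 - s ^ 2) / c) a b) ^ 2 - (gfTS (c) (s) (c) (-s) (2 * c) (0) a b) ^ 2 = 0 := by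
  intro c s
  have hc : c = Real.cosh (2 * α) := rfl
  have hs : s = Real.sinh (2 * α) := rfl
  clear_value c s
  subst hs hc
  unfold gfTS
  rw [Real.cosh_eq a, Real.sinh_eq a, Real.cosh_eq (2 * α), Real.sinh_eq (2 * α)]
  simp only [Real.exp_neg]
  have hX := Real.exp_pos a
  have hY := Real.exp_pos b
  have hA := Real.exp_pos (2 * α)
  generalize Real.exp a = X at *
  generalize Real.exp b = Y at *
  generalize Real.exp (2 * α) = A at *
  have hA2 : A ^ 2 + 1 ≠ 0 := by positivity
  have hcc : (A + A⁻¹) / 2 = (A ^ 2 + 1) / (2 * A) := by field_simp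
  rw [hcc]
  field_simp
  ring

theorem bil2TS (α a b : ℝ) :
    let c := Real.cosh (2 * α)
    let s := Real.sinh (2 * α)
    (gfTS (2 * c - (2 * s / c * (2 + 4 / c ^ 2)) * s) (2 * s - (2 * s / c * (2 + 4 / c ^ 2)) * c) (2 * c + (2 * s / c * (2 + 4 / c ^ 2)) * (-s)) (2 * (-s) + (2 * s / c * (2 + 4 / c ^ 2)) * c) (2 * (2 * (1 - s ^ 2) / c)) (2 * 0) a b) * (gfTS (c) (s) (c) (-s) (2 * c) (0) a b) - (gfTS (s) (c) (-s) (c) (0) (2 * (1 - s ^ 2) / c) a b) * (gfTS (2 * s - (2 * s / c * (2 + 4 / c ^ 2)) * c) (2 * c - (2 * s / c * (2 + 4 / c ^ 2)) * s) (2 * (-s) + (2 * s / c * (2 + 4 / c ^ 2)) * c) (2 * c + (2 * s / c * (2 + 4 / c ^ 2)) * (-s)) (2 * 0) (2 * (2 * c)) a b) + (gfTS (1 * (1 * (1 * c - (2 * s / c) * s) - (2 * s / c) * (1 * s - (2 * s / c) * c)) - (2 * s / c) * (1 * (1 * s - (2 * s / c) * c) - (2 * s / c) * (1 * c - (2 *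 s / c) * s))) (1 * (1 * (1 * s - (2 * s / c) * c) - (2 * s / c) * (1 * c - (2 * s / c) * s)) - (2 * s / c) * (1 * (1 * c - (2 * s / c) * s) - (2 * s / c) * (1 * s - (2 * s / c) * c))) (1 * (1 * (1 * c + (2 * s / c) * (-s)) + (2 * s / c) * (1 * (-s) + (2 * s / c) * c)) + (2 * s / c) * (1 * (1 * (-s) + (2 * s / c) * c) + (2 * s / c) * (1 * c + (2 * s / c) * (-s)))) (1 * (1 * (1 * (-s) + (2 * s / c) * c) + (2 * s / c) * (1 * c + (2 * s / c) * (-s))) + (2 * s / c) * (1 * (1 * c + (2 * s / c) * (-s)) + (2 * s / c) * (1 * (-s) + (2 * s / c) * c))) (1 * (1 * (1 * (2 * (1 - s ^ 2) / c)))) (1 * (1 * (1 * 0))) a b) * (gfTS (c) (s) (c) (-s) (2 * c) (0) a b) - 3 * (gfTS (1 * (1 * s - (2 * s / c) * c) - (2 * s / c) * (1 * c - (2 * s / c) * s)) (1 * (1 * c - (2 * s / c) * s) - (2 * s / c) * (1 * s - (2 * s / c) * c)) (1 * (1 * (-s) + (2 * s / c) * c) + (2 * s / c) * (1 * c + (2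 * s / c) * (-s))) (1 * (1 * c + (2 * s / c) * (-s)) + (2 * s / c) * (1 * (-s) + (2 * s / c) * c)) (1 * (1 * 0)) (1 * (1 * (2 * (1 - s ^ 2) / c))) a b) * (gfTS (1 * s - (2 * s / c) * c) (1 * c - (2 * s / c) * s) (1 * (-s) + (2 * s / c) * c) (1 * c + (2 * s / c) * (-s)) (1 * 0) (1 * (2 * c)) a b) + 3 * (gfTS (1 * c - (2 * s / c) * s) (1 * s - (2 * s / c) * c) (1 * c + (2 * s / c) * (-s)) (1 * (-s) + (2 * s / c) * c) (1 * (2 * (1 - s ^ 2) / c)) (1 * 0) a b) * (gfTS (1 * (1 * c - (2 * s / c) * s) - (2 * s / c) * (1 * s - (2 * s / c) * c)) (1 * (1 * s - (2 * s / c) * c) - (2 * s / c) * (1 * c - (2 * s / c) * s)) (1 * (1 * c + (2 * s / c) * (-s)) + (2 * s / c) * (1 * (-s) + (2 * s / c) * c)) (1 * (1 * (-s) + (2 * s / c) * c) + (2 * s / c) * (1 * c + (2 * s / c) * (-s))) (1 * (1 * (2 * c))) (1 * (1 * 0)) a b) - (gfTS (s) (c) (-s) (c) (0) (2 * (1 -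 s ^ 2) / c) a b) * (gfTS (1 * (1 * (1 * s - (2 * s / c) * c) - (2 * s / c) * (1 * c - (2 * s / c) * s)) - (2 * s / c) * (1 * (1 * c - (2 * s / c) * s) - (2 * s / c) * (1 * s - (2 * s / c) * c))) (1 * (1 * (1 * c - (2 * s / c) * s) - (2 * s / c) * (1 * s - (2 * s / c) * c)) - (2 * s / c) * (1 * (1 * s - (2 * s / c) * c) - (2 * s / c) * (1 * c - (2 * s / c) * s))) (1 * (1 * (1 * (-s) + (2 * s / c) * c) + (2 * s / c) * (1 * c + (2 * s / c) * (-s))) + (2 * s / c) * (1 * (1 * c + (2 * s / c) * (-s)) + (2 * s / c) * (1 * (-s) + (2 * s / c) * c))) (1 * (1 * (1 * c + (2 * s / c) * (-s)) + (2 * s / c) * (1 * (-s) + (2 * s / c) * c)) + (2 * s / c) * (1 * (1 * (-s) + (2 * s / c) * c) + (2 * s / c) * (1 * c + (2 * s / c) * (-s)))) (1 * (1 * (1 * 0))) (1 * (1 * (1 * (2 * c)))) a b) - 6 * ((gfTS (1 * c - (2 * s / c) * s) (1 * s - (2 * s / c) * c) (1 * c + (2 * s / c) * (-s)) (1 * (-s)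 + (2 * s / c) * c) (1 * (2 * (1 - s ^ 2) / c)) (1 * 0) a b) * (gfTS (c) (s) (c) (-s) (2 * c) (0) a b) - (gfTS (s) (c) (-s) (c) (0) (2 * (1 - s ^ 2) / c) a b) * (gfTS (1 * s - (2 * s / c) * c) (1 * c - (2 * s / c) * s) (1 * (-s) + (2 * s / c) * c) (1 * c + (2 * s / c) * (-s)) (1 * 0) (1 * (2 * c)) a b)) = 0 := by
  intro c s
  have hc : c = Real.cosh (2 * α) := rfl
  have hs : s = Real.sinh (2 * α) := rfl
  clear_value c s
  subst hs hc
  unfold gfTS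
  rw [Real.cosh_eq a, Real.sinh_eq a, Real.cosh_eq (2 * α), Real.sinh_eq (2 * α)]
  simp only [Real.exp_neg]
  have hX := Real.exp_pos a
  have hY := Real.exp_pos b
  have hA := Real.exp_pos (2 * α)
  generalize Real.exp a = X at *
  generalize Real.exp b = Y at *
  generalize Real.exp (2 * α) = A at *
  have hA2 : A ^ 2 + 1 ≠ 0 := by positivity
  have hcc : (A + A⁻¹) / 2 = (A ^ 2 + 1) / (2 * A) := by field_simp
  rw [hcc]
  field_simp
  ring

/-- The two-soliton solution: its denominator is strictly positive everywhere, and `û`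
is a smooth solution of the defocusing mKdV equation `û_t − 6û²û_x + û_xxx = 0`. -/
theorem two_soliton_solves_mkdv (α : ℝ) (hα : 0 < α) (x₀ : ℝ) :
    (∀ w : ℝ × ℝ, 0 < DdenTS α x₀ w) ∧
    ContDiff ℝ (⊤ : ℕ∞) (uhatTS α x₀) ∧
    (∀ w : ℝ × ℝ,
      ut (uhatTS α x₀) w
      - 6 * (uhatTS α x₀ w) ^ 2 * ux (uhatTS α x₀) w
      + ux (ux (ux (uhatTS α x₀))) w = 0) := by
  refine ⟨denTS_pos α x₀, uhatTS_smooth α x₀, ?_⟩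
  rintro ⟨x, t⟩
  set c := Real.cosh (2 * α) with hc
  set s := Real.sinh (2 * α) with hs
  have hc0 : c ≠ 0 := (Real.cosh_pos _).ne'
  have hxx : ∀ t y, HasDerivAt (fun y => xiTS (y, t)) 1 y := by
    intro t y
    unfold xiTS
    simpa using (hasDerivAt_id y).add_const (2 * t)
  have hxt : HasDerivAt (fun r => xiTS (x, r)) 2 t := by
    unfold xiTS
    simpa using ((hasDerivAt_id t).const_mul 2).const_add x
  have hex : ∀ t y, HasDerivAt (fun y => 2 * etaTS α x₀ (y, t)) (2 * s / c) y := by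
    intro t y
    unfold etaTS
    have h := ((((((hasDerivAt_id y).add_const (2 * t)).add_const
      (4 * t * (1 / c) ^ 2)).add_const x₀).const_mul (Real.tanh (2 * α))).const_mul 2)
    refine h.congr_deriv ?_
    rw [Real.tanh_eq_sinh_div_cosh]
    ring
  have het : HasDerivAt (fun r => 2 * etaTS α x₀ (x, r)) (2 * s / c * (2 + 4 / c ^ 2)) t := by
    unfold etaTS
    have h := ((((((hasDerivAt_id t).const_mul 2).const_add x).add
      (((hasDerivAt_id t).const_mul 4).mul_const ((1 / c) ^ 2))).add_const x₀).const_mul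
        (Real.tanh (2 * α))).const_mul 2
    refine h.congr_deriv ?_
    rw [Real.tanh_eq_sinh_div_cosh]
    ring
  have hden : ∀ w, gfTS c s c (-s) (2 * c) 0 (xiTS w) (2 * etaTS α x₀ w) ≠ 0 := by
    intro w
    rw [hc, hs, ← denTS_eq]
    exact (denTS_pos α x₀ w).ne'
  have hut := ((gfTS_deriv s c (-s) c 0 (2 * (1 - s ^ 2) / c) _ _ _ _ t hxt het).div
    (gfTS_deriv c s c (-s) (2 * c) 0 _ _ _ _ t hxt het) (hden (x, t))).deriv
  have hu : uhatTS α x₀ = fun w => gfTS s c (-s) c 0 (2 * (1 - s ^ 2) / c) (xiTS w)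
      (2 * etaTS α x₀ w) / gfTS c s c (-s) (2 * c) 0 (xiTS w) (2 * etaTS α x₀ w) :=
    funext (uhatTS_eq α x₀)
  rw [hu]
  refine Eq.trans (congrArg₂ (· + ·) (congrArg₂ (· - ·) hut rfl) rfl) ?_
  have G := fun p1 q1 p2 q2 p3 q3 y => gfTS_deriv p1 q1 p2 q2 p3 q3 _ _ _ _ y (hxx t y) (hex t y)
  refine quotTS _ _ _ _ _ _ _ _ (fun y => hden (y, t)) (G _ _ _ _ _ _) (G _ _ _ _ _ _)
    (G _ _ _ _ _ _) (G _ _ _ _ _ _) (G _ _ _ _ _ _) (G _ _ _ _ _ _) x _ _ ?_ ?_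
  · exact bil1TS α (xiTS (x, t)) (2 * etaTS α x₀ (x, t))
  · exact bil2TS α (xiTS (x, t)) (2 * etaTS α x₀ (x, t))

end
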